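/- arXiv:2006.02880 — 6 statements merged into one kernel-verified Lean document; each statement's English description precedes it below -/
import Mathlib

section
/- If X is an infinite scattered T₀-space, then w(X) ≥ |X|. -/
open Cardinal Set

universe u

/-- The weight of a topological space: the least cardinality of a basis for its topology. -/
noncomputable def tweight (X : Type u) [TopologicalSpace X] : Cardinal.{u} :=
  sInf { c : Cardinal.{u} | ∃ B : Set (Set X), TopologicalSpace.IsTopologicalBasis B ∧ #B = c }

/-- A space is scattered if every nonempty subset has a point isolated in that subset. -/
def Scattered (X : Type u) [TopologicalSpace X] : Prop :=
  ∀ S : Set X, S.Nonempty → ∃ x ∈ S, ∃ U : Set X, IsOpen U ∧ U ∩ S = {x}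

/-- If `X` is an infinite scattered T₀-space, then `w(X) ≥ |X|`. -/
theorem stmt1 (X : Type u) [TopologicalSpace X] [T0Space X] [Infinite X]
    (hX : Scattered X) : #X ≤ tweight X := by
  unfold tweight
  apply le_csInf
  · exact ⟨_, _, TopologicalSpace.isTopologicalBasis_opens, rfl⟩
  rintro c ⟨B, hB, rfl⟩
  let S : Set (Set (X × Set X)) := {P | (∀ p ∈ P, p.2 ∈ B ∧ p.2 ⊆ Prod.fst '' P) ∧
    ∀ p ∈ P, ∀ q ∈ P, p.2 = q.2 → p.1 = q.1}
  obtain ⟨P, hP⟩ : ∃ m, Maximal (· ∈ S) m := by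
    apply zorn_subset
    intro c hc hch
    refine ⟨⋃₀ c, ⟨?_, ?_⟩, fun s hs => subset_sUnion_of_mem hs⟩
    · rintro p ⟨P, hPc, hp⟩
      exact ⟨((hc hPc).1 p hp).1,
        ((hc hPc).1 p hp).2.trans (image_mono (subset_sUnion_of_mem hPc))⟩
    · rintro p ⟨P, hPc, hp⟩ q ⟨Q, hQc, hq⟩ h
      rcases hch.total hPc hQc with h1 | h1
      · exact (hc hQc).2 p (h1 hp) q hq h
      · exact (hc hPc).2 p hp q (h1 hq) h
  have hall : ∀ x, x ∈ Prod.fst '' P := by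
    by_contra! hne
    obtain ⟨x, hxA, U, hU, hUx⟩ := hX (Prod.fst '' P)ᶜ hne
    have hxU : x ∈ U := by
      have : x ∈ U ∩ (Prod.fst '' P)ᶜ := by rw [hUx]; rfl
      exact this.1
    obtain ⟨b, hb, hxb, hbU⟩ := hB.exists_subset_of_mem_open hxU hU
    have hnew : ∀ q ∈ P, q.2 ≠ b := by
      intro q hq h
      exact hxA ((hP.prop.1 q hq).2 (h ▸ hxb))
    have hins : insert (x, b) P ∈ S := by
      refine ⟨?_, ?_⟩
      · rintro p (rfl | hp)
        · refine ⟨hb, fun y hy => ?_⟩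
          rw [image_insert_eq]
          by_cases hyA : y ∈ Prod.fst '' P
          · exact Or.inr hyA
          · left
            have : y ∈ U ∩ (Prod.fst '' P)ᶜ := ⟨hbU hy, hyA⟩
            rw [hUx] at this
            exact this
        · exact ⟨(hP.prop.1 p hp).1,
            (hP.prop.1 p hp).2.trans (image_mono (subset_insert _ _))⟩
      · rintro p (rfl | hp) q (rfl | hq) h
        · rfl
        · exact absurd h.symm (hnew q hq)
        · exact absurd h (hnew p hp)
        · exact hP.prop.2 p hp q hq h
    have := hP.le_of_ge hins (subset_insert _ _) (mem_insert _ _)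
    exact hxA ⟨_, this, rfl⟩
  choose g hg hgx using hall
  refine Cardinal.mk_le_of_injective (f := fun x => (⟨(g x).2, (hP.prop.1 _ (hg x)).1⟩ : B)) ?_
  intro x y hxy
  have := hP.prop.2 _ (hg x) _ (hg y) (congrArg Subtype.val hxy)
  rwa [hgx, hgx] at this
end

section
/- If Z is a regular topological space and z ∈ Z is such that the subspace Z \ {z} is paracompact, then Z is paracompact. -/
open Set

universe u

/-- If `Z` is a regular space such that `Z \ {z}` is paracompact for some `z ∈ Z`,
then `Z` is paracompact. -/
theorem stmt3 (Z : Type u) [TopologicalSpace Z] [RegularSpace Z] (z : Z)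
    (hz : ParacompactSpace ({z}ᶜ : Set Z)) : ParacompactSpace Z := by
  refine ⟨fun α s ho hu => ?_⟩
  obtain ⟨a, ha⟩ := iUnion_eq_univ_iff.1 hu z
  obtain ⟨C, hC, hCc, hCs⟩ := exists_mem_nhds_isClosed_subset ((ho a).mem_nhds ha)
  have hzC : z ∈ C := mem_of_mem_nhds hC
  obtain ⟨v, vo, vc, vf, vs⟩ := precise_refinement
    (fun i => (Subtype.val ⁻¹' s i : Set ({z}ᶜ : Set Z)))
    (fun i => (ho i).preimage continuous_subtype_val)
    (by rw [← preimage_iUnion, hu, preimage_univ])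
  choose U hUo hU using fun i => isOpen_induced_iff.1 (vo i)
  have key : ∀ i x (hx : x ∉ C), x ∈ U i ↔ (⟨x, fun h => hx (h ▸ hzC)⟩ : ({z}ᶜ : Set Z)) ∈ v i := by
    intro i x hx
    rw [← hU i]; rfl
  refine ⟨Option α, fun o => o.elim (s a) (fun i => U i \ C), ?_, ?_, ?_, ?_⟩
  · rintro (_ | i)
    · exact ho a
    · exact (hUo i).sdiff hCc
  · refine iUnion_eq_univ_iff.2 fun x => ?_
    by_cases hx : x ∈ C
    · exact ⟨none, hCs hx⟩
    · obtain ⟨i, hi⟩ := iUnion_eq_univ_iff.1 vc ⟨x, fun h => hx (h ▸ hzC)⟩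
      exact ⟨some i, (key i x hx).2 hi, hx⟩
  · intro x
    by_cases hx : x = z
    · subst hx
      refine ⟨C, hC, (finite_singleton none).subset ?_⟩
      rintro (_ | i) ⟨y, hy, hyC⟩
      · rfl
      · exact absurd hyC hy.2
    · obtain ⟨N, hN, hNf⟩ := vf ⟨x, hx⟩
      obtain ⟨M, hM, hMN⟩ := mem_nhds_induced _ _ _ |>.1 hN
      refine ⟨M, hM, ((hNf.image some).insert none).subset ?_⟩
      rintro (_ | i) ⟨y, hy, hyM⟩
      · exact mem_insert _ _
      · exact mem_insert_of_mem _ ⟨i, ⟨_, (key i y hy.2).1 hy.1, hMN hyM⟩, rfl⟩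
  · rintro (_ | i)
    · exact ⟨a, Subset.rfl⟩
    · exact ⟨i, fun y hy => vs i ((key i y hy.2).1 hy.1)⟩
end

section
/- Let Y be an infinite set, z ∉ Y, X = Y ∪ {z}, and let F be a filter on Y (a filter of subsets of Y not containing ∅). Equip X with the single filter topology τ[F]: a set U ⊆ X is open if and only if either z ∉ U, or U = {z} ∪ F for some F ∈ F. Then the space (X, τ[F]) is almost discrete and perfectly normal if and only if F is ω-free. -/
open Cardinal Set

universe u

/-- The single filter topology `τ[F]` on `X = Y ∪ {z}` (realized as `Option Y`, with
`z = none`): a set `U` is open iff either `z ∉ U`, or `U = {z} ∪ F` for some `F ∈ F`,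
i.e. iff `z ∈ U` implies that the trace of `U` on `Y` belongs to the filter `F`. -/
def singleFilterTopology {Y : Type u} (F : Filter Y) : TopologicalSpace (Option Y) where
  IsOpen U := none ∈ U → {y : Y | some y ∈ U} ∈ F
  isOpen_univ := fun _ => by simp [Filter.univ_mem]
  isOpen_inter := fun U V hU hV h => by
    have := Filter.inter_mem (hU h.1) (hV h.2)
    simpa [Set.setOf_and] using this
  isOpen_sUnion := fun S hS h => by
    obtain ⟨U, hUS, hU⟩ := h
    exact Filter.mem_of_superset (hS U hUS hU) fun y hy => ⟨U, hUS, hy⟩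

/-- A filter is ω-free iff some countable subfamily has empty intersection. -/
def OmegaFree {Y : Type u} (F : Filter Y) : Prop :=
  ∃ A : Set (Set Y), A.Countable ∧ A ⊆ F.sets ∧ ⋂₀ A = ∅

/-- A Hausdorff space is almost discrete iff the complement of some point is discrete. -/
def AlmostDiscrete (X : Type u) [TopologicalSpace X] : Prop :=
  T2Space X ∧ ∃ x : X, DiscreteTopology ({x}ᶜ : Set X)

/-- A space is perfectly normal iff it is normal and every closed set is a Gδ-set. -/
def PerfectlyNormal (X : Type u) [TopologicalSpace X] : Prop :=
  NormalSpace X ∧ ∀ C : Set X, IsClosed C → IsGδ C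

/-- Let `Y` be an infinite set and let `F` be a (proper) filter on `Y`.  The space
`(Y ∪ {z}, τ[F])` is almost discrete and perfectly normal iff `F` is ω-free. -/
theorem stmt5 (Y : Type u) [Infinite Y] (F : Filter Y) [F.NeBot] :
    letI : TopologicalSpace (Option Y) := singleFilterTopology F
    (AlmostDiscrete (Option Y) ∧ PerfectlyNormal (Option Y)) ↔ OmegaFree F := by
  letI τ : TopologicalSpace (Option Y) := singleFilterTopology F
  have ho : ∀ U : Set (Option Y), IsOpen U ↔ (none ∈ U → {y : Y | some y ∈ U} ∈ F) :=
    fun U => Iff.rfl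
  have hn : ∀ U : Set (Option Y), none ∉ U → IsOpen U := fun U h => (ho U).2 fun h' => (h h').elim
  constructor
  · rintro ⟨-, -, hG⟩
    have hc : IsClosed ({none} : Set (Option Y)) := ⟨hn _ (by simp)⟩
    obtain ⟨T, hT, hTc, hTe⟩ := hG _ hc
    refine ⟨(fun U : Set (Option Y) => {y : Y | some y ∈ U}) '' T, hTc.image _, ?_, ?_⟩
    · rintro _ ⟨U, hU, rfl⟩
      have h0 : none ∈ ⋂₀ T := by rw [← hTe]; rfl
      exact (ho U).1 (hT U hU) (h0 U hU)
    · ext y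
      simp only [mem_empty_iff_false, iff_false]
      intro hy
      have : some y ∈ ⋂₀ T := fun U hU => hy _ ⟨U, hU, rfl⟩
      rw [← hTe] at this
      simp at this
  · rintro ⟨A, hAc, hAF, hA⟩
    have hex : ∀ y, ∃ a ∈ A, y ∉ a := by
      intro y
      by_contra! h
      have : y ∈ ⋂₀ A := fun a ha => h a ha
      rw [hA] at this
      exact this
    have hcs : ∀ y : Y, IsOpen ({some y}ᶜ : Set (Option Y)) := by
      intro y
      rw [ho]
      intro _
      obtain ⟨a, ha, hy⟩ := hex y
      refine Filter.mem_of_superset (hAF ha) ?_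
      intro x hx
      simp only [mem_setOf_eq, mem_compl_iff, mem_singleton_iff, Option.some.injEq]
      rintro rfl
      exact hy hx
    refine ⟨⟨⟨?_⟩, none, ?_⟩, ⟨?_⟩, ?_⟩
    · intro x y hxy
      cases x with
      | some x =>
        exact ⟨{some x}, {some x}ᶜ, hn _ (by simp), hcs x, rfl, fun h => hxy h.symm,
          disjoint_compl_right⟩
      | none =>
        cases y with
        | none => exact (hxy rfl).elim
        | some y =>
          exact ⟨{some y}ᶜ, {some y}, hcs y, hn _ (by simp), hxy, rfl, disjoint_compl_left⟩
    · rw [discreteTopology_iff_forall_isOpen]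
      intro S
      refine isOpen_induced_iff.2 ⟨Subtype.val '' S, hn _ ?_, ?_⟩
      · rintro ⟨x, -, hx⟩
        exact x.2 hx
      · exact preimage_image_eq _ Subtype.val_injective
    · intro s t hs ht hd
      by_cases h : none ∈ t
      · have : none ∉ s := fun h' => disjoint_left.1 hd h' h
        exact ⟨s, sᶜ, hn _ this, hs.isOpen_compl, subset_rfl, hd.subset_compl_left,
          disjoint_compl_right⟩
      · exact ⟨tᶜ, t, ht.isOpen_compl, hn _ h, hd.subset_compl_right, subset_rfl,
          disjoint_compl_left⟩
    · intro C hC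
      by_cases h : none ∈ C
      · refine ⟨(fun a : Set Y => C ∪ some '' a) '' A, ?_, hAc.image _, ?_⟩
        · rintro _ ⟨a, ha, rfl⟩
          rw [ho]
          intro _
          exact Filter.mem_of_superset (hAF ha) fun y hy => Or.inr ⟨y, hy, rfl⟩
        · ext x
          constructor
          · rintro hx _ ⟨a, ha, rfl⟩
            exact Or.inl hx
          · intro hx
            cases x with
            | none => exact h
            | some y =>
              obtain ⟨a, ha, hy⟩ := hex y
              rcases hx _ ⟨a, ha, rfl⟩ with h1 | ⟨z, hz, hzy⟩
              · exact h1
              · cases hzy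
                exact (hy hz).elim
      · exact (hn _ h).isGδ
end

section
/- Let Y be an infinite set, z ∉ Y, X = Y ∪ {z}, and let F be a free filter on Y (a filter of subsets of Y not containing ∅ and with ⋂F = ∅). Equip X with the single filter topology τ[F]: a set U ⊆ X is open if and only if either z ∉ U, or U = {z} ∪ F for some F ∈ F. Then the space (X, τ[F]) is extremally disconnected if and only if F is an ultrafilter. -/
open Cardinal Set

universe u

/-- Let `Y` be an infinite set and let `F` be a free (proper) filter on `Y`, i.e. with
`⋂ F = ∅`.  The space `(Y ∪ {z}, τ[F])` is extremally disconnected iff `F` is an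
ultrafilter, i.e. iff for every `A ⊆ Y` either `A ∈ F` or `Y \ A ∈ F`. -/
theorem stmt6 (Y : Type u) [Infinite Y] (F : Filter Y) [F.NeBot]
    (hfree : ⋂₀ F.sets = ∅) :
    letI : TopologicalSpace (Option Y) := singleFilterTopology F
    ExtremallyDisconnected (Option Y) ↔ ∀ A : Set Y, A ∈ F ∨ Aᶜ ∈ F := by
  letI : TopologicalSpace (Option Y) := singleFilterTopology F
  have hopen : ∀ U : Set (Option Y), IsOpen U ↔ (none ∈ U → {y : Y | some y ∈ U} ∈ F) :=
    fun U => Iff.rfl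
  constructor
  · intro h A
    have hU : IsOpen (some '' A : Set (Option Y)) := by
      rw [hopen]
      rintro ⟨y, _, hy⟩
      cases hy
    have hcl := h.open_closure _ hU
    by_cases hn : none ∈ closure (some '' A : Set (Option Y))
    · left
      refine Filter.mem_of_superset ((hopen _).1 hcl hn) ?_
      intro y hy
      have hC : IsClosed (insert none (some '' A) : Set (Option Y)) := by
        rw [← isOpen_compl_iff, hopen]
        intro h'
        exact absurd (Set.mem_insert _ _) h'
      have := closure_minimal (Set.subset_insert _ _) hC hy
      simpa using this
    · right
      have hO : IsOpen (closure (some '' A : Set (Option Y)))ᶜ := isClosed_closure.isOpen_compl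
      refine Filter.mem_of_superset ((hopen _).1 hO hn) ?_
      intro y hy hyA
      exact hy (subset_closure ⟨y, hyA, rfl⟩)
  · intro h
    refine ⟨fun U hU => ?_⟩
    rw [hopen]
    intro hn
    rcases h {y : Y | some y ∈ U} with hA | hA
    · exact Filter.mem_of_superset hA fun y hy => subset_closure hy
    · have hC : IsClosed U := by
        rw [← isOpen_compl_iff, hopen]
        exact fun _ => hA
      rw [hC.closure_eq] at hn ⊢
      exact (hopen _).1 hU hn
end

section
/- Let μ be an infinite cardinal and let Y be an infinite set of cardinality κ with κ^{<μ} = κ. Then there exists a family A of subsets of Y such that |A| = 2^κ, A has a subfamily K of cardinality μ with ⋂K = ∅, and whenever D and E are disjoint nonempty subfamilies of A each of cardinality smaller than μ, the set ⋂D is not a subset of ⋃E. -/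
open Cardinal Set

lemma aux_small (μ : Cardinal.{0}) (hμ : ℵ₀ ≤ μ) (Y : Type) (hκ : ℵ₀ ≤ #Y)
    (hpow : #Y ^< μ = #Y) : #{s : Set Y // #s < μ} = #Y := by
  have hμκ : μ ≤ #Y := by
    by_contra h
    push Not at h
    have h1 := Cardinal.le_powerlt (#Y) h
    rw [hpow] at h1
    have h2 : #Y < #Y ^ #Y :=
      (Cardinal.cantor (#Y)).trans_le
        (Cardinal.power_le_power_right ((Cardinal.natCast_lt_aleph0 (n := 2)).le.trans hκ))
    exact absurd h1 (not_le.mpr h2)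
  apply le_antisymm
  · have hex : ∀ s : {s : Set Y // #s < μ}, ∃ p : (Σ a : μ.ord.ToType, (Set.Iio a → Y)),
        Set.range p.2 = s.1 := by
      rintro ⟨s, hs⟩
      have ho : (#s).ord < Ordinal.type (α := μ.ord.ToType) (· < ·) := by
        rw [Ordinal.type_toType]
        exact Cardinal.ord_lt_ord.mpr hs
      obtain ⟨a, ha⟩ := Ordinal.typein_surj (α := μ.ord.ToType) (· < ·) ho
      have hc : #(Set.Iio a) = #s := by
        have := congrArg Ordinal.card ha
        rw [Cardinal.card_ord] at this
        rw [← this]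
        rfl
      obtain ⟨e⟩ := Cardinal.eq.mp hc
      refine ⟨⟨a, fun x => (e x : Y)⟩, ?_⟩
      ext y
      constructor
      · rintro ⟨x, rfl⟩
        exact (e x).2
      · intro hy
        exact ⟨e.symm ⟨y, hy⟩, by simp⟩
    choose f hf using hex
    have hinj : Function.Injective f := by
      intro s t h
      apply Subtype.ext
      rw [← hf s, ← hf t, h]
    refine (Cardinal.mk_le_of_injective hinj).trans ?_
    rw [Cardinal.mk_sigma]
    have : ∀ a : μ.ord.ToType, #(Set.Iio a → Y) ≤ #Y := by
      intro a
      have hlt : #(Set.Iio a) < μ := by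
        exact Cardinal.mk_Iio_ord_toType a
      have := Cardinal.le_powerlt (#Y) hlt
      rw [hpow] at this
      simpa using this
    refine (Cardinal.sum_le_sum _ (fun _ => #Y) this).trans ?_
    simp only [Cardinal.sum_const', Cardinal.mk_ord_toType]
    exact (mul_le_mul_left hμκ _).trans (Cardinal.mul_eq_self hκ).le
  · refine Cardinal.mk_le_of_injective (f := fun y => ⟨{y}, ?_⟩) ?_
    · rw [Cardinal.mk_singleton]
      exact Cardinal.one_lt_aleph0.trans_le hμ
    · intro x y h
      simpa using h

/-- Let `μ` be an infinite cardinal and `Y` an infinite set of cardinality `κ` with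
`κ ^< μ = κ`.  Then there is a family `A` of subsets of `Y` with `|A| = 2 ^ κ` which has
a subfamily `K` of cardinality `μ` with `⋂ K = ∅`, and such that whenever `D, E` are
disjoint nonempty subfamilies of `A` of cardinality smaller than `μ`, the intersection
`⋂ D` is not contained in the union `⋃ E`. -/
theorem stmt9 (μ κ : Cardinal) (hμ : ℵ₀ ≤ μ) (Y : Type) (hY : #Y = κ) (hκ : ℵ₀ ≤ κ)
    (hpow : κ ^< μ = κ) :
    ∃ A : Set (Set Y), #A = (2 : Cardinal) ^ κ ∧
      (∃ K ⊆ A, #K = μ ∧ ⋂₀ K = ∅) ∧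
      ∀ D E : Set (Set Y), D ⊆ A → E ⊆ A → Disjoint D E →
        D.Nonempty → E.Nonempty → #D < μ → #E < μ → ¬ ⋂₀ D ⊆ ⋃₀ E := by
  subst hY
  have hμκ : μ ≤ #Y := by
    by_contra h
    push Not at h
    have h1 := Cardinal.le_powerlt (#Y) h
    rw [hpow] at h1
    have h2 : #Y < #Y ^ #Y :=
      (Cardinal.cantor (#Y)).trans_le
        (Cardinal.power_le_power_right ((Cardinal.natCast_lt_aleph0 (n := 2)).le.trans hκ))
    exact absurd h1 (not_le.mpr h2)
  have hP := aux_small μ hμ Y hκ hpow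
  have hQ := aux_small μ hμ {s : Set Y // #s < μ} (by rw [hP]; exact hκ) (by rw [hP]; exact hpow)
  rw [hP] at hQ
  have hT : #Y = #({s : Set Y // #s < μ} × {F : Set {s : Set Y // #s < μ} // #F < μ} ×
      {s : Set Y // #s < μ}) := by
    simp only [Cardinal.mk_prod, Cardinal.lift_id]
    rw [hP, hQ, Cardinal.mul_eq_self hκ, Cardinal.mul_eq_self hκ]
  obtain ⟨e⟩ := Cardinal.eq.mp hT
  let B : Set Y ⊕ Y → Set Y := fun i => Sum.elim
    (fun X => {y | ∃ t ∈ (e y).2.1.1, t.1 = X ∩ (e y).1.1})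
    (fun m => {y | m ∈ (e y).2.2.1}) i
  have hsep : ∀ X X' : Set Y, ∃ y : Y, X ≠ X' → ¬ (y ∈ X ↔ y ∈ X') := by
    intro X X'
    by_cases h : X = X'
    · have : Nonempty Y := by
        rw [← Cardinal.mk_ne_zero_iff]
        exact (Cardinal.aleph0_pos.trans_le hκ).ne'
      exact ⟨this.some, fun h' => absurd h h'⟩
    · by_contra hc
      push Not at hc
      exact h (Set.ext fun y => (hc y).2)
  choose sep hsep using hsep
  have key : ∀ d e' : Set (Set Y ⊕ Y), Disjoint d e' → #d < μ → #e' < μ →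
      ∃ y, (∀ i ∈ d, y ∈ B i) ∧ ∀ i ∈ e', y ∉ B i := by
    intro d e' hde hd he
    let d1 : Set (Set Y) := Sum.inl ⁻¹' d
    let e1 : Set (Set Y) := Sum.inl ⁻¹' e'
    let d2 : Set Y := Sum.inr ⁻¹' d
    have hd1 : #d1 < μ := (Cardinal.mk_preimage_of_injective _ _ Sum.inl_injective).trans_lt hd
    have he1 : #e1 < μ := (Cardinal.mk_preimage_of_injective _ _ Sum.inl_injective).trans_lt he
    have hd2 : #d2 < μ := (Cardinal.mk_preimage_of_injective _ _ Sum.inr_injective).trans_lt hd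
    let s : Set Y := Set.range (fun p : d1 × e1 => sep p.1 p.2)
    have hs : #s < μ := by
      refine Cardinal.mk_range_le.trans_lt ?_
      simp only [Cardinal.mk_prod, Cardinal.lift_id]
      exact Cardinal.mul_lt_of_lt hμ hd1 he1
    let r : Set Y → {s : Set Y // #s < μ} := fun X =>
      ⟨X ∩ s, (Cardinal.mk_le_mk_of_subset Set.inter_subset_right).trans_lt hs⟩
    have hF : #(r '' d1) < μ := Cardinal.mk_image_le.trans_lt hd1
    refine ⟨e.symm (⟨s, hs⟩, ⟨r '' d1, hF⟩, ⟨d2, hd2⟩), ?_, ?_⟩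
    · rintro (X | m) hi
      · simp only [B, Sum.elim_inl, Set.mem_setOf_eq, Equiv.apply_symm_apply]
        exact ⟨r X, ⟨X, hi, rfl⟩, rfl⟩
      · simp only [B, Sum.elim_inr, Set.mem_setOf_eq, Equiv.apply_symm_apply]
        exact hi
    · rintro (X | m) hi
      · simp only [B, Sum.elim_inl, Set.mem_setOf_eq, Equiv.apply_symm_apply]
        rintro ⟨t, ⟨X', hX', rfl⟩, ht⟩
        have hne : X' ≠ X := by
          rintro rfl
          exact Set.disjoint_left.mp hde hX' hi
        apply hsep X' X hne
        have hm : sep X' X ∈ s := ⟨(⟨X', hX'⟩, ⟨X, hi⟩), rfl⟩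
        have := Set.ext_iff.mp ht (sep X' X)
        simpa [r, hm] using this
      · simp only [B, Sum.elim_inr, Set.mem_setOf_eq, Equiv.apply_symm_apply]
        exact fun h => Set.disjoint_left.mp hde h hi
  have hone : (1 : Cardinal) < μ := Cardinal.one_lt_aleph0.trans_le hμ
  have hB : Function.Injective B := by
    intro i j hij
    by_contra hne
    obtain ⟨y, h1, h2⟩ := key {i} {j} (by simpa using hne) (by simpa using hone)
      (by simpa using hone)
    exact h2 j rfl (hij ▸ h1 i rfl)
  refine ⟨Set.range B, ?_, ?_, ?_⟩
  · rw [Cardinal.mk_range_eq _ hB]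
    simp only [Cardinal.mk_sum, Cardinal.lift_id, Cardinal.mk_set]
    exact Cardinal.add_eq_left (hκ.trans (Cardinal.cantor _).le) (Cardinal.cantor _).le
  · obtain ⟨M, hM⟩ := Cardinal.le_mk_iff_exists_set.mp hμκ
    refine ⟨(fun m => B (Sum.inr m)) '' M, ?_, ?_, ?_⟩
    · rintro _ ⟨m, _, rfl⟩
      exact ⟨_, rfl⟩
    · exact (Cardinal.mk_image_eq (hB.comp Sum.inr_injective)).trans hM
    · rw [Set.eq_empty_iff_forall_notMem]
      intro y hy
      have hsub : M ⊆ (e y).2.2.1 := fun m hm => hy _ ⟨m, hm, rfl⟩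
      have := (Cardinal.mk_le_mk_of_subset hsub).trans_lt (e y).2.2.2
      rw [hM] at this
      exact lt_irrefl _ this
  · intro D E hD hE hDE _ _ hDc hEc hsub
    obtain ⟨y, h1, h2⟩ := key (B ⁻¹' D) (B ⁻¹' E) (hDE.preimage B)
      ((Cardinal.mk_preimage_of_injective _ _ hB).trans_lt hDc)
      ((Cardinal.mk_preimage_of_injective _ _ hB).trans_lt hEc)
    have hy : y ∈ ⋂₀ D := by
      intro S hS
      obtain ⟨i, rfl⟩ := hD hS
      exact h1 i hS
    obtain ⟨S, hS, hyS⟩ := hsub hy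
    obtain ⟨i, rfl⟩ := hE hS
    exact h2 i hS hyS
end

section
/- Every partition of the closed unit interval [0,1] into at least two nonempty closed sets is uncountable; that is, if P is a family of pairwise disjoint nonempty closed subsets of [0,1] whose union is [0,1] and |P| ≥ 2, then P is uncountable. -/
open Cardinal Set

/-- Every partition of the closed unit interval `[0,1]` into at least two nonempty
closed sets is uncountable: if `P` is a family of pairwise disjoint nonempty closed
subsets of `[0,1]` whose union is all of `[0,1]` and `P` has at least two members,
then `|P| > ℵ₀`. -/
theorem stmt19 (P : Set (Set unitInterval))
    (hne : ∀ A ∈ P, A.Nonempty)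
    (hclosed : ∀ A ∈ P, IsClosed A)
    (hdisj : P.PairwiseDisjoint id)
    (hcover : ⋃₀ P = Set.univ)
    (htwo : 2 ≤ #P) :
    ℵ₀ < #P := by
  by_contra hcon
  have hcount : Countable P := by
    rw [← Cardinal.mk_le_aleph0_iff]; exact not_lt.mp hcon
  have huniq : ∀ A ∈ P, ∀ C ∈ P, ∀ x, x ∈ A → x ∈ C → A = C := by
    intro A hA C hC x hxA hxC
    by_contra hAC
    exact Set.disjoint_left.mp (hdisj hA hC hAC) hxA hxC
  have hex : ∀ x, ∃ A ∈ P, x ∈ A := by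
    intro x
    have : x ∈ ⋃₀ P := by rw [hcover]; trivial
    exact this
  -- key connectedness fact
  have key : ∀ I : Set unitInterval, IsPreconnected I → ∀ C ∈ P,
      (∀ z ∈ I, z ∈ C → z ∈ interior C) → ∀ y ∈ I, y ∈ C → I ⊆ C := by
    intro I hI C hC hint y hyI hyC x hxI
    by_contra hxC
    obtain ⟨z, hz, hz1, hz2⟩ := hI (interior C) Cᶜ isOpen_interior (hclosed C hC).isOpen_compl
      (by
        intro z hz
        by_cases h : z ∈ C
        · exact Or.inl (hint z hz h)
        · exact Or.inr h)
      ⟨y, hyI, hint y hyI hyC⟩ ⟨x, hxI, hxC⟩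
    exact hz2 (interior_subset hz1)
  obtain ⟨⟨A₁, h₁⟩, ⟨A₂, h₂⟩, h12⟩ := Cardinal.two_le_iff.mp htwo
  let U : Set unitInterval := ⋃ A ∈ P, interior A
  have hU : IsOpen U := isOpen_biUnion fun _ _ => isOpen_interior
  have hUint : ∀ z ∈ U, ∀ C ∈ P, z ∈ C → z ∈ interior C := by
    intro z hz C hC hzC
    obtain ⟨D, hD, hzD⟩ := Set.mem_iUnion₂.mp hz
    rwa [huniq C hC D hD z hzC (interior_subset hzD)]
  let B : Set unitInterval := Uᶜ
  have hB : IsClosed B := hU.isClosed_compl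
  have hBne : B.Nonempty := by
    by_contra hBe
    have hall : ∀ z, z ∈ U := by
      intro z
      by_contra hz
      exact hBe ⟨z, hz⟩
    obtain ⟨y, hy⟩ := hne A₁ h₁
    obtain ⟨x, hx⟩ := hne A₂ h₂
    have := key univ isPreconnected_univ A₁ h₁ (fun z _ => hUint z (hall z) A₁ h₁) y trivial hy
    exact h12 (Subtype.ext (huniq A₁ h₁ A₂ h₂ x (this trivial) hx))
  haveI : CompactSpace B := isCompact_iff_compactSpace.mp hB.isCompact
  haveI : Nonempty B := hBne.to_subtype
  obtain ⟨⟨A, hA⟩, ⟨x, hxB⟩, hx⟩ := nonempty_interior_of_iUnion_of_closed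
    (f := fun A : P => ((↑) : B → unitInterval) ⁻¹' (A : Set unitInterval))
    (fun A => (hclosed A A.2).preimage continuous_subtype_val)
    (by
      rw [Set.eq_univ_iff_forall]
      intro z
      obtain ⟨A, hA, hz⟩ := hex z
      exact Set.mem_iUnion.mpr ⟨⟨A, hA⟩, hz⟩)
  have hxA : x ∈ A := by simpa using interior_subset hx
  obtain ⟨r, hr, hball⟩ := Metric.mem_nhds_iff.mp (mem_interior_iff_mem_nhds.mp hx)
  have hI : IsPreconnected (Metric.ball x r) := by
    apply Set.OrdConnected.isPreconnected
    have : Metric.ball x r = Subtype.val ⁻¹' (Metric.ball (x : ℝ) r) := rfl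
    rw [this, Real.ball_eq_Ioo]
    exact Set.OrdConnected.preimage_mono Set.ordConnected_Ioo (fun _ _ h => h)
  apply hxB
  refine Set.mem_iUnion₂.mpr ⟨A, hA, ?_⟩
  rw [mem_interior_iff_mem_nhds]
  refine Filter.mem_of_superset (Metric.ball_mem_nhds x hr) ?_
  intro y hy
  by_contra hyA
  obtain ⟨C, hC, hyC⟩ := hex y
  have hsub := key _ hI C hC (by
    intro z hz hzC
    refine hUint z ?_ C hC hzC
    by_contra hzU
    have hzA : z ∈ A := hball (show (⟨z, hzU⟩ : B) ∈ Metric.ball (⟨x, hxB⟩ : B) r from hz)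
    exact hyA ((huniq A hA C hC z hzA hzC) ▸ hyC)) y hy hyC
  have := huniq A hA C hC x hxA (hsub (Metric.mem_ball_self hr))
  exact hyA (this ▸ hyC)
end
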